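/- arXiv:1503.08309 — 2 statements merged into one kernel-verified Lean document; each statement's English description precedes it below -/
import Mathlib

section
/- Let p be an odd prime, let t ≥ 2 and s be integers with 1 ≤ s ≤ p−1, and set r = t(p−1)+s. Then for every integer i with 0 ≤ i ≤ s−1, the following identities hold in the polynomial ring (ℤ/pℤ)[X,Y]: ∑_{u,v ∈ ℤ/pℤ} u^i · v^{r−i} · (v·X − u·Y)^{p−1−s} = 0 and ∑_{u,v ∈ ℤ/pℤ} u^{r−i} · v^{i} · (v·X − u·Y)^{p−1−s} = 0. (Powers use the convention a^0 = 1 for every a, including 0^0 = 1.) -/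
/-!
Expanding `(v X - u Y)^n` with `n = p - 1 - s` by the binomial theorem, every term of the first sum
factors as a power sum `∑ u, u^(i+k)` times a sum over `v`, with `0 ≤ k ≤ n`. Since
`i + k ≤ p - 2`, the power sum vanishes over `ZMod p`. The second sum is the same with the roles of
`u` and `v` exchanged.
-/

open MvPolynomial

/-- The common form of both identities: `a` is the variable of low degree, and the linear form
is written with arbitrary coefficients `P`, `Q`. -/
lemma sum_sum_mul_pow_eq_zero (p : ℕ) [Fact p.Prime] (i b n : ℕ) (h : i + n < p - 1)
    (P Q : MvPolynomial (Fin 2) (ZMod p)) :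
    ∑ a : ZMod p, ∑ c : ZMod p, C (a ^ i * c ^ b) * (C a * P + C c * Q) ^ n = 0 := by
  have expand : ∀ a c : ZMod p, C (a ^ i * c ^ b) * (C a * P + C c * Q) ^ n =
      ∑ k ∈ Finset.range (n + 1),
        C (a ^ (i + k)) * (C (c ^ (b + (n - k))) * (P ^ k * Q ^ (n - k) * (n.choose k : MvPolynomial (Fin 2) (ZMod p)))) := by
    intro a c
    rw [add_pow, Finset.mul_sum]
    refine Finset.sum_congr rfl fun k _ => ?_
    simp only [C_mul, C_pow, mul_pow, pow_add]
    ring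
  simp_rw [expand]
  have swap : ∀ a : ZMod p, ∑ c : ZMod p, ∑ k ∈ Finset.range (n + 1),
        C (a ^ (i + k)) * (C (c ^ (b + (n - k))) * (P ^ k * Q ^ (n - k) * (n.choose k : MvPolynomial (Fin 2) (ZMod p)))) =
      ∑ k ∈ Finset.range (n + 1), C (a ^ (i + k)) *
        ∑ c : ZMod p, C (c ^ (b + (n - k))) * (P ^ k * Q ^ (n - k) * (n.choose k : MvPolynomial (Fin 2) (ZMod p))) := by
    intro a
    rw [Finset.sum_comm]
    simp_rw [Finset.mul_sum]
  simp_rw [swap]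
  rw [Finset.sum_comm]
  refine Finset.sum_eq_zero fun k hk => ?_
  have hk' : i + k < Fintype.card (ZMod p) - 1 := by
    rw [ZMod.card]
    have := Finset.mem_range.mp hk
    omega
  rw [← Finset.sum_mul, ← map_sum, FiniteField.sum_pow_lt_card_sub_one _ _ hk', map_zero, zero_mul]

/-- For an odd prime `p`, `t ≥ 2`, `1 ≤ s ≤ p-1`, `r = t(p-1)+s`, and
`0 ≤ i ≤ s-1`, the map `Ψ` kills the monomials `x^i y^(r-i)` and `x^(r-i) y^i`. -/
theorem stmt0 (p : ℕ) (hp : p.Prime) (hp2 : p ≠ 2) [Fact p.Prime]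
    (t s : ℕ) (ht : 2 ≤ t) (hs1 : 1 ≤ s) (hs2 : s ≤ p - 1)
    (r : ℕ) (hr : r = t * (p - 1) + s)
    (i : ℕ) (hi : i ≤ s - 1) :
    (∑ u : ZMod p, ∑ v : ZMod p,
        MvPolynomial.C (u ^ i * v ^ (r - i)) *
          (MvPolynomial.C v * MvPolynomial.X 0 - MvPolynomial.C u * MvPolynomial.X 1)
            ^ (p - 1 - s) = (0 : MvPolynomial (Fin 2) (ZMod p))) ∧
    (∑ u : ZMod p, ∑ v : ZMod p,
        MvPolynomial.C (u ^ (r - i) * v ^ i) *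
          (MvPolynomial.C v * MvPolynomial.X 0 - MvPolynomial.C u * MvPolynomial.X 1)
            ^ (p - 1 - s) = (0 : MvPolynomial (Fin 2) (ZMod p))) := by
  have h : i + (p - 1 - s) < p - 1 := by omega
  constructor
  · rw [← sum_sum_mul_pow_eq_zero p i (r - i) (p - 1 - s) h (-X 1) (X 0)]
    refine Finset.sum_congr rfl fun u _ => Finset.sum_congr rfl fun v _ => ?_
    congr 2
    ring
  · rw [Finset.sum_comm, ← sum_sum_mul_pow_eq_zero p i (r - i) (p - 1 - s) h (X 0) (-X 1)]
    refine Finset.sum_congr rfl fun v _ => Finset.sum_congr rfl fun u _ => ?_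
    rw [mul_comm (u ^ (r - i))]
    congr 2
    ring
end

section
/- Let p be an odd prime, let t ≥ 2 and s be integers with 1 ≤ s ≤ p−1, and set r = t(p−1)+s. Then for every integer l with 1 ≤ l ≤ t, the identity ∑_{u,v ∈ ℤ/pℤ} u^{l(p−1)} · v^{r−l(p−1)} · (v·X − u·Y)^{p−1−s} = X^{p−1−s} holds in the polynomial ring (ℤ/pℤ)[X,Y]. (Powers use the convention a^0 = 1 for every a, including 0^0 = 1.) -/
/-!
Expand `(v X - u Y) ^ n`, `n = p - 1 - s`, by the binomial theorem and sum over `v` first.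
The coefficient of `X ^ k Y ^ (n - k)` then contains the power sum `∑ v, v ^ (b + k)` with
`b = (t - l) (p - 1) + s`. By `sum_pow_zmod` a power sum with positive exponent `i` is `-1` when
`p - 1 ∣ i` and `0` otherwise; since `1 ≤ s + k ≤ p - 1`, only `k = n` survives, contributing
`-X ^ n`. The remaining sum `∑ u, u ^ (l (p - 1))` is again `-1` because `l ≥ 1`.
-/

open MvPolynomial

/-- For `i ≠ 0` the term `x = 0` vanishes, so the sum reduces to the one over the units. -/
theorem sum_pow_zmod (p : ℕ) [Fact p.Prime] (i : ℕ) (hi : i ≠ 0) :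
    ∑ x : ZMod p, x ^ i = if p - 1 ∣ i then -1 else 0 := by
  have h := FiniteField.sum_pow_units (ZMod p) i
  rw [ZMod.card] at h
  rw [← h, Fintype.sum_eq_add_sum_compl (0 : ZMod p), zero_pow hi, zero_add]
  symm
  refine Finset.sum_bij (fun (x : (ZMod p)ˣ) _ => (x : ZMod p)) ?_ ?_ ?_ ?_
  · intro x _
    simp
  · intro x _ y _ hxy
    exact Units.ext hxy
  · intro x hx
    exact ⟨Units.mk0 x (by simpa using hx), Finset.mem_univ _, rfl⟩
  · intro x _
    rfl

/-- The sum over `v` alone, for fixed `u`, when only the top binomial term `v ^ n X ^ n` can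
have a nonvanishing power sum. -/
theorem sum_mul_sub_pow (p : ℕ) [Fact p.Prime] (b n : ℕ) (hb : b ≠ 0)
    (htop : p - 1 ∣ b + n) (hlow : ∀ k < n, ¬ p - 1 ∣ b + k) (u : ZMod p) :
    ∑ v : ZMod p, C (v ^ b) * (C v * X 0 - C u * X 1) ^ n
      = -(X 0 : MvPolynomial (Fin 2) (ZMod p)) ^ n := by
  have expand : ∀ v : ZMod p,
      C (v ^ b) * (C v * X 0 - C u * X 1 : MvPolynomial (Fin 2) (ZMod p)) ^ n
        = ∑ k ∈ Finset.range (n + 1),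
          C (v ^ (b + k)) * (X 0 ^ k * (-(C u * X 1)) ^ (n - k) * (n.choose k : MvPolynomial (Fin 2) (ZMod p))) := by
    intro v
    rw [sub_eq_add_neg, add_pow, Finset.mul_sum]
    refine Finset.sum_congr rfl fun k _ => ?_
    rw [mul_pow, pow_add, C_mul, C_pow v k]
    ring
  simp_rw [expand]
  rw [Finset.sum_comm]
  simp_rw [← Finset.sum_mul, ← map_sum]
  rw [Finset.sum_range_succ, Finset.sum_eq_zero, sum_pow_zmod p _ (by omega), if_pos htop]
  · simp
  · intro k hk
    rw [sum_pow_zmod p _ (by omega), if_neg (hlow k (Finset.mem_range.mp hk))]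
    simp

/-- For an odd prime `p`, `t ≥ 2`, `1 ≤ s ≤ p-1`, `r = t(p-1)+s`, and
`1 ≤ l ≤ t`, the map `Ψ` sends the monomial `x^(l(p-1)) y^(r-l(p-1))` to `X^(p-1-s)`. -/
theorem stmt1 (p : ℕ) (hp : p.Prime) (hp2 : p ≠ 2) [Fact p.Prime]
    (t s : ℕ) (ht : 2 ≤ t) (hs1 : 1 ≤ s) (hs2 : s ≤ p - 1)
    (r : ℕ) (hr : r = t * (p - 1) + s)
    (l : ℕ) (hl1 : 1 ≤ l) (hl2 : l ≤ t) :
    ∑ u : ZMod p, ∑ v : ZMod p,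
        MvPolynomial.C (u ^ (l * (p - 1)) * v ^ (r - l * (p - 1))) *
          (MvPolynomial.C v * MvPolynomial.X 0 - MvPolynomial.C u * MvPolynomial.X 1)
            ^ (p - 1 - s)
      = (MvPolynomial.X 0 : MvPolynomial (Fin 2) (ZMod p)) ^ (p - 1 - s) := by
  obtain ⟨d, rfl⟩ := Nat.exists_eq_add_of_le hl2
  have hb : r - l * (p - 1) = d * (p - 1) + s := by
    rw [hr, add_mul, add_assoc, Nat.add_sub_cancel_left]
  have htop : p - 1 ∣ d * (p - 1) + s + (p - 1 - s) := by
    rw [add_assoc, Nat.add_sub_cancel' hs2]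
    exact Dvd.dvd.add (Dvd.intro_left d rfl) dvd_rfl
  have hlow : ∀ k < p - 1 - s, ¬ p - 1 ∣ d * (p - 1) + s + k := by
    intro k hk h
    rw [add_assoc, Nat.dvd_add_right (Dvd.intro_left d rfl)] at h
    have := Nat.le_of_dvd (by omega) h
    omega
  rw [hb]
  simp_rw [C_mul, mul_assoc, ← Finset.mul_sum]
  simp_rw [sum_mul_sub_pow p _ _ (by omega : d * (p - 1) + s ≠ 0) htop hlow]
  have hl : l * (p - 1) ≠ 0 := Nat.mul_ne_zero (by omega) (by omega)
  rw [← Finset.sum_mul, ← map_sum, sum_pow_zmod p _ hl, if_pos (Dvd.intro_left l rfl)]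
  simp
end
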